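/- For data f, g ∈ C_0^∞(B(0,1)) and k ≤ ⌊d/2⌋ + 1, the hyperboloidal energies of iterated boosts of the solution φ of □_m φ = 0 (m ≤ m₀) satisfy E_m(L^{i₁}⋯L^{i_k} φ, τ) ≤ C (‖f‖²_{H^{k+1}} + ‖g‖²_{H^k}) for all τ, with C depending only on d and m₀. -/

import Mathlib

open MeasureTheory Real

noncomputable section

/-- Spatial slice: ℝ^d as Euclidean space. -/
abbrev Spc (d : ℕ) := EuclideanSpace ℝ (Fin d)

/-- Time derivative ∂ₜ. -/
def dt {d : ℕ} (φ : ℝ × Spc d → ℝ) (p : ℝ × Spc d) : ℝ := fderiv ℝ φ p (1, 0)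

/-- Spatial derivative ∂_{xⁱ}. -/
def dx {d : ℕ} (i : Fin d) (φ : ℝ × Spc d → ℝ) (p : ℝ × Spc d) : ℝ :=
  fderiv ℝ φ p (0, EuclideanSpace.single i 1)

/-- Lorentz boost Lⁱ = xⁱ ∂ₜ + t ∂_{xⁱ}. -/
def boost {d : ℕ} (i : Fin d) (φ : ℝ × Spc d → ℝ) (p : ℝ × Spc d) : ℝ :=
  p.2 i * dt φ p + p.1 * dx i φ p

/-- Klein–Gordon operator □ₘ = -∂ₜₜ + Δ - m². -/
def box {d : ℕ} (m : ℝ) (φ : ℝ × Spc d → ℝ) (p : ℝ × Spc d) : ℝ :=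
  -(dt (dt φ) p) + (∑ i, dx i (dx i φ) p) - m ^ 2 * φ p

/-- Spatial derivative for functions on ℝ^d. -/
def dxs {d : ℕ} (i : Fin d) (f : Spc d → ℝ) (x : Spc d) : ℝ :=
  fderiv ℝ f x (EuclideanSpace.single i 1)

/-- Laplacian on ℝ^d. -/
def lap {d : ℕ} (f : Spc d → ℝ) (x : Spc d) : ℝ := ∑ i, dxs i (dxs i f) x

/-- Iterated Lorentz boosts L^{i₁} ⋯ L^{i_k} indexed by a list of directions. -/
def boostList {d : ℕ} (l : List (Fin d)) (φ : ℝ × Spc d → ℝ) : ℝ × Spc d → ℝ :=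
  l.foldr (fun i ψ => boost i ψ) φ

/-- The hyperboloidal energy E_m(φ, τ) (hyperboloid parametrized by
x ↦ (√(τ² + |x|²), x), with induced volume form (τ/t)dx). -/
def energy {d : ℕ} (m τ : ℝ) (φ : ℝ × Spc d → ℝ) : ℝ :=
  ∫ x : Spc d,
    (fun t => (fun p : ℝ × Spc d =>
      ((1 / (t * τ)) * ∑ i, (boost i φ p) ^ 2 + (τ / t) * (dt φ p) ^ 2
          + (t / τ) * m ^ 2 * (φ p) ^ 2) * (τ / t))
      (t, x)) (Real.sqrt (τ ^ 2 + ‖x‖ ^ 2))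

/-- Squared Sobolev H^s norm (integer s): sum of squared L² norms of derivatives. -/
def HnormSq {d : ℕ} (s : ℕ) (f : Spc d → ℝ) : ℝ :=
  ∑ j ∈ Finset.range (s + 1), ∫ x, ‖iteratedFDeriv ℝ j f x‖ ^ 2

/-- Smooth functions on `ℝ^d` supported in the open unit ball. -/
structure BallData {d : ℕ} (f : Spc d → ℝ) : Prop where
  smooth : ContDiff ℝ (⊤ : ℕ∞) f
  supp : tsupport f ⊆ Metric.ball 0 1

theorem BallData.hasCompactSupport {d : ℕ} {f : Spc d → ℝ} (hf : BallData f) :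
    HasCompactSupport f :=
  HasCompactSupport.of_support_subset_isCompact (isCompact_closedBall 0 1)
    ((subset_tsupport f).trans (hf.supp.trans Metric.ball_subset_closedBall))

theorem contDiff_dxs {d : ℕ} {f : Spc d → ℝ} (hf : ContDiff ℝ (⊤ : ℕ∞) f) (i : Fin d) :
    ContDiff ℝ (⊤ : ℕ∞) (dxs i f) :=
  (hf.fderiv_right (m := ((⊤ : ℕ∞) : WithTop ℕ∞)) (by simp)).clm_apply contDiff_const

theorem contDiff_coord {d : ℕ} (i : Fin d) :
    ContDiff ℝ (⊤ : ℕ∞) (fun x : Spc d => x i) :=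
  (EuclideanSpace.proj (𝕜 := ℝ) i).contDiff

theorem BallData.add {d : ℕ} {f g : Spc d → ℝ} (hf : BallData f) (hg : BallData g) :
    BallData (fun x => f x + g x) :=
  ⟨hf.smooth.add hg.smooth, (tsupport_add f g).trans (Set.union_subset hf.supp hg.supp)⟩

theorem BallData.mul_left {d : ℕ} {f h : Spc d → ℝ} (hf : BallData f)
    (hh : ContDiff ℝ (⊤ : ℕ∞) h) : BallData (fun x => h x * f x) :=
  ⟨hh.mul hf.smooth, (tsupport_mul_subset_right (f := h)).trans hf.supp⟩

theorem BallData.const_mul {d : ℕ} {f : Spc d → ℝ} (hf : BallData f) (c : ℝ) :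
    BallData (fun x => c * f x) :=
  hf.mul_left contDiff_const

theorem BallData.dxs {d : ℕ} {f : Spc d → ℝ} (hf : BallData f) (i : Fin d) :
    BallData (dxs i f) :=
  ⟨contDiff_dxs hf.smooth i, (tsupport_fderiv_apply_subset ℝ _).trans hf.supp⟩

theorem BallData.sum {d : ℕ} {ι : Type*} (s : Finset ι) {f : ι → Spc d → ℝ}
    (hf : ∀ i, BallData (f i)) : BallData (fun x => ∑ i ∈ s, f i x) := by
  classical
  induction s using Finset.induction_on with
  | empty =>
    refine ⟨by simpa using contDiff_const, ?_⟩
    simp [tsupport, Function.support]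
  | insert a s ha ih =>
    simp only [Finset.sum_insert ha]
    exact (hf a).add ih

theorem BallData.lap {d : ℕ} {f : Spc d → ℝ} (hf : BallData f) : BallData (lap f) :=
  BallData.sum _ fun i => (hf.dxs i).dxs i

theorem BallData.integrable_norm_iteratedFDeriv_sq {d : ℕ} {f : Spc d → ℝ} (hf : BallData f)
    (j : ℕ) : Integrable (fun x => ‖iteratedFDeriv ℝ j f x‖ ^ 2) := by
  have hc : Continuous (iteratedFDeriv ℝ j f) :=
    hf.smooth.continuous_iteratedFDeriv (by exact_mod_cast le_top)
  refine (hc.norm.pow 2).integrable_of_hasCompactSupport ?_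
  refine (hf.hasCompactSupport.iteratedFDeriv j (𝕜 := ℝ)).mono fun x hx h0 => hx ?_
  have h1 : ‖iteratedFDeriv ℝ j f x‖ = 0 := norm_eq_zero.2 h0
  exact (sq_eq_zero_iff (a := ‖iteratedFDeriv ℝ j f x‖)).2 h1

theorem HnormSq_nonneg {d : ℕ} (s : ℕ) (f : Spc d → ℝ) : 0 ≤ HnormSq s f :=
  Finset.sum_nonneg fun _ _ => integral_nonneg fun _ => by positivity

theorem HnormSq_mono {d : ℕ} {s t : ℕ} (h : s ≤ t) (f : Spc d → ℝ) :
    HnormSq s f ≤ HnormSq t f :=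
  Finset.sum_le_sum_of_subset_of_nonneg (Finset.range_mono (Nat.succ_le_succ h))
    fun _ _ _ => integral_nonneg fun _ => by positivity

theorem HnormSq_le_of_norm_le {d : ℕ} {s t : ℕ} {f g : Spc d → ℝ} (hf : BallData f) (C : ℝ)
    (h : ∀ j ≤ s, ∀ x, ‖iteratedFDeriv ℝ j g x‖
      ≤ C * ∑ k ∈ Finset.range (t + 1), ‖iteratedFDeriv ℝ k f x‖) :
    HnormSq s g ≤ (s + 1) * (C ^ 2 * (t + 1)) * HnormSq t f := by
  have hint : Integrable (fun x => C ^ 2 * (t + 1) *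
      ∑ k ∈ Finset.range (t + 1), ‖iteratedFDeriv ℝ k f x‖ ^ 2) :=
    (integrable_finsetSum _ fun k _ => hf.integrable_norm_iteratedFDeriv_sq k).const_mul _
  have hval : ∫ x, C ^ 2 * (t + 1) * ∑ k ∈ Finset.range (t + 1), ‖iteratedFDeriv ℝ k f x‖ ^ 2
      = C ^ 2 * (t + 1) * HnormSq t f := by
    rw [integral_const_mul, integral_finsetSum _ fun k _ =>
        hf.integrable_norm_iteratedFDeriv_sq k, HnormSq]
  have hpt : ∀ j ≤ s, ∀ x, ‖iteratedFDeriv ℝ j g x‖ ^ 2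
      ≤ C ^ 2 * (t + 1) * ∑ k ∈ Finset.range (t + 1), ‖iteratedFDeriv ℝ k f x‖ ^ 2 := by
    intro j hj x
    have h2 := sq_sum_le_card_mul_sum_sq (s := Finset.range (t + 1))
      (f := fun k => ‖iteratedFDeriv ℝ k f x‖)
    rw [Finset.card_range, Nat.cast_add, Nat.cast_one] at h2
    have h3 := pow_le_pow_left₀ (norm_nonneg _) (h j hj x) 2
    rw [mul_pow] at h3
    rw [mul_assoc]
    exact h3.trans (mul_le_mul_of_nonneg_left h2 (sq_nonneg C))
  have key : ∀ j ∈ Finset.range (s + 1), ∫ x, ‖iteratedFDeriv ℝ j g x‖ ^ 2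
      ≤ C ^ 2 * (t + 1) * HnormSq t f := by
    intro j hj
    rw [← hval]
    exact integral_mono_of_nonneg (Filter.Eventually.of_forall fun x => sq_nonneg _) hint
      (Filter.Eventually.of_forall fun x => hpt j (Finset.mem_range_succ_iff.1 hj) x)
  refine (Finset.sum_le_sum key).trans_eq ?_
  rw [Finset.sum_const, Finset.card_range, nsmul_eq_mul, Nat.cast_add, Nat.cast_one]
  ring

theorem HnormSq_add_le {d : ℕ} (s : ℕ) {f g : Spc d → ℝ} (hf : BallData f) (hg : BallData g) :
    HnormSq s (fun x => f x + g x) ≤ 2 * (HnormSq s f + HnormSq s g) := by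
  simp only [HnormSq]
  rw [← Finset.sum_add_distrib, Finset.mul_sum]
  refine Finset.sum_le_sum fun j _ => ?_
  rw [← integral_add (hf.integrable_norm_iteratedFDeriv_sq j)
    (hg.integrable_norm_iteratedFDeriv_sq j), ← integral_const_mul]
  refine integral_mono_of_nonneg (Filter.Eventually.of_forall fun x => by positivity)
    (((hf.integrable_norm_iteratedFDeriv_sq j).add
      (hg.integrable_norm_iteratedFDeriv_sq j)).const_mul 2)
    (Filter.Eventually.of_forall fun x => ?_)
  have h1 : iteratedFDeriv ℝ j (fun x => f x + g x) x
      = iteratedFDeriv ℝ j f x + iteratedFDeriv ℝ j g x :=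
    iteratedFDeriv_add_apply (hf.smooth.contDiffAt.of_le (by exact_mod_cast le_top))
      (hg.smooth.contDiffAt.of_le (by exact_mod_cast le_top))
  have h2 := norm_add_le (iteratedFDeriv ℝ j f x) (iteratedFDeriv ℝ j g x)
  simp only [h1]
  calc _ ≤ (‖iteratedFDeriv ℝ j f x‖ + ‖iteratedFDeriv ℝ j g x‖) ^ 2 := by gcongr
    _ ≤ _ := add_sq_le

theorem HnormSq_const_mul {d : ℕ} (s : ℕ) {f : Spc d → ℝ} (hf : BallData f) (c : ℝ) :
    HnormSq s (fun x => c * f x) = c ^ 2 * HnormSq s f := by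
  simp only [HnormSq, Finset.mul_sum, ← integral_const_mul]
  refine Finset.sum_congr rfl fun j _ => integral_congr_ae (Filter.Eventually.of_forall fun x => ?_)
  have h1 : iteratedFDeriv ℝ j (fun x => c * f x) x = c • iteratedFDeriv ℝ j f x :=
    iteratedFDeriv_const_smul_apply' (a := c)
      (hf.smooth.contDiffAt.of_le (by exact_mod_cast le_top))
  simp [h1, norm_smul, mul_pow]

theorem norm_iteratedFDeriv_dxs_le {d : ℕ} {f : Spc d → ℝ} (hf : ContDiff ℝ (⊤ : ℕ∞) f)
    (i : Fin d) (j : ℕ) (x : Spc d) :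
    ‖iteratedFDeriv ℝ j (dxs i f) x‖ ≤ ‖iteratedFDeriv ℝ (j + 1) f x‖ := by
  have h := norm_iteratedFDeriv_clm_apply_const (𝕜 := ℝ) (f := fderiv ℝ f)
    (c := EuclideanSpace.single i (1 : ℝ)) (x := x) (n := j) (N := j)
    (hf.fderiv_right (m := j) (by exact_mod_cast le_top)).contDiffAt le_rfl
  rw [norm_iteratedFDeriv_fderiv] at h
  simp only [PiLp.norm_single, norm_one, one_mul] at h
  exact h

theorem HnormSq_dxs_le {d : ℕ} (s : ℕ) {f : Spc d → ℝ} (hf : BallData f) (i : Fin d) :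
    HnormSq s (dxs i f) ≤ (s + 1) * (s + 2) * HnormSq (s + 1) f := by
  refine (HnormSq_le_of_norm_le (t := s + 1) hf 1 fun j hj x => ?_).trans_eq (by push_cast; ring)
  rw [one_mul]
  exact (norm_iteratedFDeriv_dxs_le hf.smooth i j x).trans
    (Finset.single_le_sum (f := fun k => ‖iteratedFDeriv ℝ k f x‖)
      (fun _ _ => norm_nonneg _) (Finset.mem_range.2 (by omega)))

theorem HnormSq_lap_le {d : ℕ} (s : ℕ) {f : Spc d → ℝ} (hf : BallData f) :
    HnormSq s (lap f) ≤ (s + 1) * (d ^ 2 * (s + 3)) * HnormSq (s + 2) f := by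
  refine (HnormSq_le_of_norm_le (t := s + 2) hf d fun j hj x => ?_).trans_eq (by push_cast; ring)
  have h1 : iteratedFDeriv ℝ j (lap f) x = ∑ i, iteratedFDeriv ℝ j (dxs i (dxs i f)) x :=
    iteratedFDeriv_fun_sum_apply fun i _ =>
      ((hf.dxs i).dxs i).smooth.contDiffAt.of_le (by exact_mod_cast le_top)
  rw [h1]
  refine (norm_sum_le _ _).trans ?_
  refine (Finset.sum_le_card_nsmul _ _ (‖iteratedFDeriv ℝ (j + 2) f x‖) fun i _ => ?_).trans ?_
  · exact (norm_iteratedFDeriv_dxs_le (hf.dxs i).smooth i j x).trans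
      (norm_iteratedFDeriv_dxs_le hf.smooth i (j + 1) x)
  · simp only [Finset.card_univ, Fintype.card_fin, nsmul_eq_mul]
    gcongr
    exact Finset.single_le_sum (f := fun k => ‖iteratedFDeriv ℝ k f x‖)
      (fun _ _ => norm_nonneg _) (Finset.mem_range.2 (by omega))

theorem exists_norm_iteratedFDeriv_le_on_ball {d : ℕ} {h : Spc d → ℝ}
    (hh : ContDiff ℝ (⊤ : ℕ∞) h) (s : ℕ) :
    ∃ B : ℝ, 0 ≤ B ∧ ∀ j ≤ s, ∀ x ∈ Metric.closedBall (0 : Spc d) 1,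
      ‖iteratedFDeriv ℝ j h x‖ ≤ B := by
  have hb : ∀ j : ℕ, ∃ B : ℝ, ∀ x ∈ Metric.closedBall (0 : Spc d) 1,
      ‖iteratedFDeriv ℝ j h x‖ ≤ B := fun j =>
    (isCompact_closedBall 0 1).exists_bound_of_continuousOn
      (hh.continuous_iteratedFDeriv (m := j) (by exact_mod_cast le_top)).continuousOn
  choose B hB using hb
  refine ⟨∑ j ∈ Finset.range (s + 1), |B j|, Finset.sum_nonneg fun _ _ => abs_nonneg _,
    fun j hj x hx => ?_⟩
  exact ((hB j x hx).trans (le_abs_self _)).trans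
    (Finset.single_le_sum (f := fun j => |B j|) (fun _ _ => abs_nonneg _)
      (Finset.mem_range.2 (by omega)))

theorem exists_HnormSq_mul_le {d : ℕ} {h : Spc d → ℝ} (hh : ContDiff ℝ (⊤ : ℕ∞) h) (s : ℕ) :
    ∃ C : ℝ, 0 ≤ C ∧ ∀ f : Spc d → ℝ, BallData f →
      HnormSq s (fun x => h x * f x) ≤ C * HnormSq s f := by
  obtain ⟨B, hB0, hB⟩ := exists_norm_iteratedFDeriv_le_on_ball hh s
  refine ⟨(s + 1) * (((s + 1) * (2 ^ s * B)) ^ 2 * (s + 1)), by positivity, fun f hf =>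
    HnormSq_le_of_norm_le hf _ fun j hj x => ?_⟩
  set S := ∑ k ∈ Finset.range (s + 1), ‖iteratedFDeriv ℝ k f x‖ with hS
  have hS0 : 0 ≤ S := Finset.sum_nonneg fun _ _ => norm_nonneg _
  have hk : ∀ k ≤ s, ‖iteratedFDeriv ℝ k f x‖ ≤ S := fun k hks =>
    Finset.single_le_sum (f := fun k => ‖iteratedFDeriv ℝ k f x‖)
      (fun _ _ => norm_nonneg _) (Finset.mem_range.2 (by omega))
  refine (norm_iteratedFDeriv_mul_le hh hf.smooth x (n := j)
    (by exact_mod_cast le_top)).trans ?_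
  have hterm : ∀ k ∈ Finset.range (j + 1), (j.choose k : ℝ) * ‖iteratedFDeriv ℝ k h x‖
      * ‖iteratedFDeriv ℝ (j - k) f x‖ ≤ 2 ^ s * B * S := by
    intro k hkj
    rw [Finset.mem_range] at hkj
    by_cases hx : x ∈ tsupport f
    · have hc : (j.choose k : ℝ) ≤ 2 ^ s := by
        calc (j.choose k : ℝ) ≤ 2 ^ j := by exact_mod_cast Nat.choose_le_two_pow j k
          _ ≤ 2 ^ s := pow_le_pow_right₀ (by norm_num) hj
      have hb := hB k (by omega) x (Metric.ball_subset_closedBall (hf.supp hx))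
      have := hk (j - k) (by omega)
      gcongr
    · have : iteratedFDeriv ℝ (j - k) f x = 0 := by
        by_contra h0
        exact hx (support_iteratedFDeriv_subset (j - k) h0)
      rw [this, norm_zero, mul_zero]
      positivity
  refine (Finset.sum_le_card_nsmul _ _ _ hterm).trans ?_
  simp only [Finset.card_range, nsmul_eq_mul]
  have : ((j + 1 : ℕ) : ℝ) ≤ s + 1 := by exact_mod_cast Nat.succ_le_succ hj
  calc ((j + 1 : ℕ) : ℝ) * (2 ^ s * B * S) ≤ (s + 1) * (2 ^ s * B * S) := by gcongr
    _ = _ := by ring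

theorem exists_HnormSq_coord_mul_le (d s : ℕ) :
    ∃ C : ℝ, 0 ≤ C ∧ ∀ (i : Fin d) (f : Spc d → ℝ), BallData f →
      HnormSq s (fun x => x i * f x) ≤ C * HnormSq s f := by
  choose C hC0 hC using fun i : Fin d => exists_HnormSq_mul_le (contDiff_coord i) s
  refine ⟨∑ i, C i, Finset.sum_nonneg fun i _ => hC0 i, fun i f hf => (hC i f hf).trans ?_⟩
  exact mul_le_mul_of_nonneg_right
    (Finset.single_le_sum (fun i _ => hC0 i) (Finset.mem_univ i)) (HnormSq_nonneg s f)

/-- The Cauchy data of `Lⁱ φ` on `{t = 2}` lose one derivative with respect to those of `φ`. -/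
theorem exists_HnormSq_boost_data_le (d s : ℕ) (m₀ : ℝ) :
    ∃ C : ℝ, 0 ≤ C ∧ ∀ m : ℝ, 0 < m → m ≤ m₀ → ∀ (i : Fin d) (f g : Spc d → ℝ),
      BallData f → BallData g →
      HnormSq (s + 1) (fun x => x i * g x + 2 * dxs i f x)
        + HnormSq s (fun x => x i * (lap f x + -m ^ 2 * f x) + (dxs i f x + 2 * dxs i g x))
        ≤ C * (HnormSq (s + 2) f + HnormSq (s + 1) g) := by
  obtain ⟨K₁, hK₁, h₁⟩ := exists_HnormSq_coord_mul_le d (s + 1)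
  obtain ⟨K₂, hK₂, h₂⟩ := exists_HnormSq_coord_mul_le d s
  set A : ℝ := ((s + 1 : ℕ) + 1) * ((s + 1 : ℕ) + 2) with hA
  set B : ℝ := (s + 1) * (s + 2) with hB
  set L : ℝ := (s + 1) * (d ^ 2 * (s + 3)) with hL
  have hA0 : 0 ≤ A := by positivity
  have hB0 : 0 ≤ B := by positivity
  have hL0 : 0 ≤ L := by positivity
  refine ⟨(2 * K₁ + 8 * A) + (4 * K₂ * (L + m₀ ^ 4) + 4 * B + 16 * B), by positivity,
    fun m hm hmm i f g hf hg => ?_⟩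
  have hx := contDiff_coord i
  set F := HnormSq (s + 2) f with hF
  set G := HnormSq (s + 1) g with hG
  have hF0 : 0 ≤ F := HnormSq_nonneg _ _
  have hG0 : 0 ≤ G := HnormSq_nonneg _ _
  have e1 : HnormSq (s + 1) (fun x => x i * g x + 2 * dxs i f x)
      ≤ 2 * (K₁ * G + 2 ^ 2 * (A * F)) := by
    refine (HnormSq_add_le _ (hg.mul_left hx) ((hf.dxs i).const_mul 2)).trans ?_
    rw [HnormSq_const_mul _ (hf.dxs i)]
    have := HnormSq_dxs_le (s + 1) hf i
    have := h₁ i g hg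
    gcongr
  have e2 : HnormSq s (fun x => x i * (lap f x + -m ^ 2 * f x))
      ≤ K₂ * (2 * (L * F + m₀ ^ 4 * F)) := by
    refine (h₂ i _ (hf.lap.add (hf.const_mul _))).trans ?_
    refine mul_le_mul_of_nonneg_left ?_ hK₂
    refine (HnormSq_add_le _ hf.lap (hf.const_mul _)).trans ?_
    rw [HnormSq_const_mul _ hf]
    have t1 := HnormSq_lap_le s hf
    have t2 : HnormSq s f ≤ F := HnormSq_mono (by omega) f
    have t3 : (-m ^ 2) ^ 2 ≤ m₀ ^ 4 := by
      calc (-m ^ 2) ^ 2 = m ^ 4 := by ring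
        _ ≤ m₀ ^ 4 := by gcongr
    have t4 := mul_le_mul t3 t2 (HnormSq_nonneg s f) (by positivity)
    linarith
  have e3 : HnormSq s (fun x => dxs i f x + 2 * dxs i g x) ≤ 2 * (B * F + 2 ^ 2 * (B * G)) := by
    refine (HnormSq_add_le _ (hf.dxs i) ((hg.dxs i).const_mul 2)).trans ?_
    rw [HnormSq_const_mul _ (hg.dxs i)]
    have t1 := HnormSq_dxs_le s hf i
    have t2 := HnormSq_dxs_le s hg i
    have t3 : HnormSq (s + 1) f ≤ F := HnormSq_mono (by omega) f
    have t4 : HnormSq s (dxs i f) ≤ B * F := t1.trans (by gcongr)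
    have t5 : HnormSq s (dxs i g) ≤ B * G := t2
    linarith
  have e4 := HnormSq_add_le s ((hf.lap.add (hf.const_mul (-m ^ 2))).mul_left hx)
    ((hf.dxs i).add ((hg.dxs i).const_mul 2))
  have p1 : 0 ≤ K₁ * F := by positivity
  have p2 : 0 ≤ A * G := by positivity
  have p3 : 0 ≤ K₂ * (L + m₀ ^ 4) * G := by positivity
  have p4 : 0 ≤ B * G := by positivity
  have p5 : 0 ≤ B * F := by positivity
  nlinarith [e1, e2, e3, e4, p1, p2, p3, p4, p5]

section DirectionalDerivative

variable {E : Type*} [NormedAddCommGroup E] [NormedSpace ℝ E]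

/-- The directional derivative `∂_v F`. -/
def dirD (v : E) (F : E → ℝ) (p : E) : ℝ := fderiv ℝ F p v

theorem contDiff_dirD (v : E) {F : E → ℝ} (hF : ContDiff ℝ (⊤ : ℕ∞) F) :
    ContDiff ℝ (⊤ : ℕ∞) (dirD v F) :=
  (hF.fderiv_right (m := ((⊤ : ℕ∞) : WithTop ℕ∞)) (by simp)).clm_apply contDiff_const

theorem ContDiff.diffAt {F : E → ℝ} (hF : ContDiff ℝ (⊤ : ℕ∞) F) (p : E) :
    DifferentiableAt ℝ F p :=
  hF.differentiable (by simp) p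

theorem dirD_add (v : E) {F G : E → ℝ} (hF : ContDiff ℝ (⊤ : ℕ∞) F)
    (hG : ContDiff ℝ (⊤ : ℕ∞) G) (p : E) :
    dirD v (fun q => F q + G q) p = dirD v F p + dirD v G p := by
  simp [dirD, fderiv_fun_add (hF.diffAt p) (hG.diffAt p)]

theorem dirD_mul (v : E) {F G : E → ℝ} (hF : ContDiff ℝ (⊤ : ℕ∞) F)
    (hG : ContDiff ℝ (⊤ : ℕ∞) G) (p : E) :
    dirD v (fun q => F q * G q) p = dirD v F p * G p + F p * dirD v G p := by
  simp only [dirD, fderiv_fun_mul (hF.diffAt p) (hG.diffAt p), add_apply,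
    smul_apply, smul_eq_mul]
  ring

theorem dirD_const (v : E) (c : ℝ) (p : E) : dirD v (fun _ => c) p = 0 := by
  simp [dirD]

theorem dirD_const_mul (v : E) {F : E → ℝ} (hF : ContDiff ℝ (⊤ : ℕ∞) F) (c : ℝ) (p : E) :
    dirD v (fun q => c * F q) p = c * dirD v F p := by
  rw [dirD_mul v contDiff_const hF, dirD_const, zero_mul, zero_add]

theorem dirD_sq (v : E) {F : E → ℝ} (hF : ContDiff ℝ (⊤ : ℕ∞) F) (p : E) :
    dirD v (fun q => F q ^ 2) p = 2 * F p * dirD v F p := by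
  simp only [sq, dirD_mul v hF hF]
  ring

theorem dirD_sum (v : E) {ι : Type*} (s : Finset ι) {F : ι → E → ℝ}
    (hF : ∀ i, ContDiff ℝ (⊤ : ℕ∞) (F i)) (p : E) :
    dirD v (fun q => ∑ i ∈ s, F i q) p = ∑ i ∈ s, dirD v (F i) p := by
  simp [dirD, fderiv_fun_sum fun i (_ : i ∈ s) => (hF i).diffAt p]

theorem dirD_dirD_apply (v w : E) {F : E → ℝ} (hF : ContDiff ℝ (⊤ : ℕ∞) F) (p : E) :
    dirD v (dirD w F) p = fderiv ℝ (fderiv ℝ F) p v w := by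
  have h : DifferentiableAt ℝ (fderiv ℝ F) p :=
    (hF.fderiv_right (m := ((⊤ : ℕ∞) : WithTop ℕ∞)) (by simp)).differentiable (by simp) p
  have : dirD w F = fun q => fderiv ℝ F q w := rfl
  rw [dirD, this, fderiv_clm_apply h (differentiableAt_const w)]
  simp

theorem dirD_comm (v w : E) {F : E → ℝ} (hF : ContDiff ℝ (⊤ : ℕ∞) F) :
    dirD v (dirD w F) = dirD w (dirD v F) := by
  funext p
  rw [dirD_dirD_apply v w hF, dirD_dirD_apply w v hF]
  exact (hF.contDiffAt.isSymmSndFDerivAt (by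
    rw [minSmoothness_of_isRCLikeNormedField]
    exact WithTop.coe_le_coe.2 (le_top : (2 : ℕ∞) ≤ ⊤))).eq v w

end DirectionalDerivative

theorem contDiff_fst_coord {d : ℕ} : ContDiff ℝ (⊤ : ℕ∞) (fun p : ℝ × Spc d => p.1) :=
  contDiff_fst

theorem contDiff_snd_coord {d : ℕ} (i : Fin d) :
    ContDiff ℝ (⊤ : ℕ∞) (fun p : ℝ × Spc d => p.2 i) :=
  (contDiff_coord i).comp contDiff_snd

theorem dirD_fst_coord {d : ℕ} (v p : ℝ × Spc d) :
    dirD v (fun p : ℝ × Spc d => p.1) p = v.1 := by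
  simp [dirD, fderiv_fst]

theorem dirD_snd_coord {d : ℕ} (i : Fin d) (v p : ℝ × Spc d) :
    dirD v (fun p : ℝ × Spc d => p.2 i) p = v.2 i := by
  have h : HasFDerivAt (fun p : ℝ × Spc d => p.2 i)
      ((EuclideanSpace.proj (𝕜 := ℝ) i).comp (ContinuousLinearMap.snd ℝ ℝ (Spc d))) p :=
    ((EuclideanSpace.proj (𝕜 := ℝ) i).comp (ContinuousLinearMap.snd ℝ ℝ (Spc d))).hasFDerivAt
  simp [dirD, h.fderiv]

section Boost

variable {d : ℕ} {φ : ℝ × Spc d → ℝ}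

theorem dt_eq_dirD (φ : ℝ × Spc d → ℝ) : dt φ = dirD (1, 0) φ := rfl

theorem dx_eq_dirD (i : Fin d) (φ : ℝ × Spc d → ℝ) :
    dx i φ = dirD (0, EuclideanSpace.single i 1) φ := rfl

theorem contDiff_dt (hφ : ContDiff ℝ (⊤ : ℕ∞) φ) : ContDiff ℝ (⊤ : ℕ∞) (dt φ) :=
  contDiff_dirD _ hφ

theorem contDiff_dx (i : Fin d) (hφ : ContDiff ℝ (⊤ : ℕ∞) φ) : ContDiff ℝ (⊤ : ℕ∞) (dx i φ) :=
  contDiff_dirD _ hφ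

theorem contDiff_boost (i : Fin d) (hφ : ContDiff ℝ (⊤ : ℕ∞) φ) :
    ContDiff ℝ (⊤ : ℕ∞) (boost i φ) :=
  ((contDiff_snd_coord i).mul (contDiff_dt hφ)).add (contDiff_fst_coord.mul (contDiff_dx i hφ))

theorem dirD_boost (i : Fin d) (v : ℝ × Spc d) (hφ : ContDiff ℝ (⊤ : ℕ∞) φ) :
    dirD v (boost i φ)
      = fun p => (v.2 i * dt φ p + v.1 * dx i φ p) + boost i (dirD v φ) p := by
  funext p
  have h := dirD_add v ((contDiff_snd_coord i).mul (contDiff_dt hφ))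
    (contDiff_fst_coord.mul (contDiff_dx i hφ)) p
  rw [dirD_mul v (contDiff_snd_coord i) (contDiff_dt hφ),
    dirD_mul v contDiff_fst_coord (contDiff_dx i hφ), dirD_snd_coord, dirD_fst_coord,
    dt_eq_dirD, dx_eq_dirD, dirD_comm v _ hφ, dirD_comm v _ hφ] at h
  rw [boost, dt_eq_dirD, dx_eq_dirD, dt_eq_dirD, dx_eq_dirD]
  refine h.trans ?_
  ring

theorem dt_boost (i : Fin d) (hφ : ContDiff ℝ (⊤ : ℕ∞) φ) :
    dt (boost i φ) = fun p => dx i φ p + boost i (dt φ) p := by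
  rw [dt_eq_dirD, dirD_boost i _ hφ]
  funext p
  simp [dt_eq_dirD]

theorem dx_boost (i j : Fin d) (hφ : ContDiff ℝ (⊤ : ℕ∞) φ) :
    dx j (boost i φ) = fun p => (if i = j then 1 else 0) * dt φ p + boost i (dx j φ) p := by
  rw [dx_eq_dirD, dirD_boost i _ hφ]
  funext p
  simp [dx_eq_dirD]

theorem dt_dx_comm (i : Fin d) (hφ : ContDiff ℝ (⊤ : ℕ∞) φ) : dt (dx i φ) = dx i (dt φ) :=
  dirD_comm _ _ hφ

theorem boost_eq (i : Fin d) (φ : ℝ × Spc d → ℝ) (p : ℝ × Spc d) :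
    boost i φ p = dirD (p.2 i, p.1 • EuclideanSpace.single i 1) φ p := by
  have : ((p.2 i, p.1 • EuclideanSpace.single i 1) : ℝ × Spc d)
      = p.2 i • (1, 0) + p.1 • (0, EuclideanSpace.single i 1) := by
    ext <;> simp
  rw [dirD, this, map_add, map_smul, map_smul]
  rfl

theorem box_boost (m : ℝ) (i : Fin d) (hφ : ContDiff ℝ (⊤ : ℕ∞) φ)
    (hbox : ∀ p, box m φ p = 0) (p : ℝ × Spc d) : box m (boost i φ) p = 0 := by
  have hT : dt (dt (boost i φ)) p = 2 * dt (dx i φ) p + boost i (dt (dt φ)) p := by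
    rw [dt_boost i hφ, dt_eq_dirD,
      dirD_add _ (contDiff_dx i hφ) (contDiff_boost i (contDiff_dt hφ)), ← dt_eq_dirD,
      ← dt_eq_dirD, dt_boost i (contDiff_dt hφ), ← dt_dx_comm i hφ]
    ring
  have hX : ∀ j, dx j (dx j (boost i φ)) p
      = (if i = j then 1 else 0) * (2 * dx j (dt φ) p) + boost i (dx j (dx j φ)) p := by
    intro j
    rw [dx_boost i j hφ, dx_eq_dirD,
      dirD_add _ (contDiff_const.mul (contDiff_dt hφ)) (contDiff_boost i (contDiff_dx j hφ)),
      dirD_const_mul _ (contDiff_dt hφ), ← dx_eq_dirD, ← dx_eq_dirD,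
      dx_boost i j (contDiff_dx j hφ), dt_dx_comm j hφ]
    ring
  have h0 : boost i (box m φ) p = 0 := by
    rw [show box m φ = fun _ => 0 from funext hbox, boost_eq, dirD_const]
  have h1 : boost i (box m φ) p = -1 * boost i (dt (dt φ)) p
      + ∑ j, boost i (dx j (dx j φ)) p + -m ^ 2 * boost i φ p := by
    have e : box m φ = fun p => (-1 * dt (dt φ) p + ∑ j, dx j (dx j φ) p) + -m ^ 2 * φ p := by
      funext p; rw [box]; ring
    have c1 := contDiff_dt (contDiff_dt hφ)
    have c2 := fun j => contDiff_dx j (contDiff_dx j hφ)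
    simp only [boost_eq]
    rw [e, dirD_add _ ((contDiff_const.mul c1).add (ContDiff.sum fun j _ => c2 j))
      (contDiff_const.mul hφ), dirD_add _ (contDiff_const.mul c1) (ContDiff.sum fun j _ => c2 j),
      dirD_const_mul _ c1, dirD_const_mul _ hφ, dirD_sum _ _ c2]
  rw [box, hT, Finset.sum_congr rfl fun j _ => hX j, Finset.sum_add_distrib]
  simp only [ite_mul, one_mul, zero_mul, Finset.sum_ite_eq, Finset.mem_univ, if_true]
  rw [dt_dx_comm i hφ]
  linarith

theorem dxs_slice (i : Fin d) (c : ℝ) (hφ : ContDiff ℝ (⊤ : ℕ∞) φ) (x : Spc d) :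
    dxs i (fun y => φ (c, y)) x = dx i φ (c, x) := by
  have h : HasFDerivAt (fun y : Spc d => φ (c, y))
      ((fderiv ℝ φ (c, x)).comp (ContinuousLinearMap.inr ℝ ℝ (Spc d))) x :=
    (hφ.diffAt (c, x)).hasFDerivAt.comp x (hasFDerivAt_prodMk_right c x)
  simp [dxs, h.fderiv, dx]

end Boost

section CauchyData

variable {d : ℕ} {φ : ℝ × Spc d → ℝ}

theorem boost_data_zero (i : Fin d) (hφ : ContDiff ℝ (⊤ : ℕ∞) φ) (x : Spc d) :
    boost i φ (2, x) = x i * dt φ (2, x) + 2 * dxs i (fun y => φ (2, y)) x := by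
  rw [dxs_slice i 2 hφ, boost]

theorem dx_dx_slice (i : Fin d) (hφ : ContDiff ℝ (⊤ : ℕ∞) φ) (c : ℝ) (x : Spc d) :
    dxs i (dxs i (fun y => φ (c, y))) x = dx i (dx i φ) (c, x) := by
  rw [show dxs i (fun y => φ (c, y)) = fun y => dx i φ (c, y) from
    funext fun y => dxs_slice i c hφ y, dxs_slice i c (contDiff_dx i hφ)]

theorem boost_data_one (m : ℝ) (i : Fin d) (hφ : ContDiff ℝ (⊤ : ℕ∞) φ)
    (hbox : ∀ p, box m φ p = 0) (x : Spc d) :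
    dt (boost i φ) (2, x)
      = x i * (lap (fun y => φ (2, y)) x + -m ^ 2 * φ (2, x))
        + (dxs i (fun y => φ (2, y)) x + 2 * dxs i (fun y => dt φ (2, y)) x) := by
  have h := hbox (2, x)
  rw [box] at h
  simp only [lap, dx_dx_slice _ hφ, dxs_slice i 2 hφ, dxs_slice i 2 (contDiff_dt hφ),
    dt_boost i hφ, boost]
  have : dt (dt φ) (2, x) = ∑ j, dx j (dx j φ) (2, x) - m ^ 2 * φ (2, x) := by linarith
  rw [this]
  ring

/-- Cauchy data on `{t = 2}` supported in the unit ball. -/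
structure HasBallData (φ : ℝ × Spc d → ℝ) : Prop where
  zero : BallData fun x => φ (2, x)
  one : BallData fun x => dt φ (2, x)

theorem HasBallData.boost {m : ℝ} (h : HasBallData φ) (hφ : ContDiff ℝ (⊤ : ℕ∞) φ)
    (hbox : ∀ p, box m φ p = 0) (i : Fin d) : HasBallData (boost i φ) := by
  constructor
  · simp only [boost_data_zero i hφ]
    exact (h.one.mul_left (contDiff_coord i)).add ((h.zero.dxs i).const_mul 2)
  · simp only [boost_data_one m i hφ hbox]
    exact ((h.zero.lap.add (h.zero.const_mul _)).mul_left (contDiff_coord i)).add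
      ((h.zero.dxs i).add ((h.one.dxs i).const_mul 2))

theorem boostList_solution {m : ℝ} (hφ : ContDiff ℝ (⊤ : ℕ∞) φ) (hbox : ∀ p, box m φ p = 0)
    (h : HasBallData φ) (l : List (Fin d)) :
    ContDiff ℝ (⊤ : ℕ∞) (boostList l φ) ∧ (∀ p, box m (boostList l φ) p = 0) ∧
      HasBallData (boostList l φ) := by
  induction l with
  | nil => exact ⟨hφ, hbox, h⟩
  | cons i l ih =>
    obtain ⟨h1, h2, h3⟩ := ih
    exact ⟨contDiff_boost i h1, box_boost m i h1 h2, h3.boost h1 h2 i⟩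

/-- The squared `H^{s+1} × H^s` norm of the Cauchy data on `{t = 2}`. -/
def dataNormSq (s : ℕ) (φ : ℝ × Spc d → ℝ) : ℝ :=
  HnormSq (s + 1) (fun x => φ (2, x)) + HnormSq s (fun x => dt φ (2, x))

theorem dataNormSq_nonneg (s : ℕ) (φ : ℝ × Spc d → ℝ) : 0 ≤ dataNormSq s φ :=
  add_nonneg (HnormSq_nonneg _ _) (HnormSq_nonneg _ _)

theorem exists_dataNormSq_boostList_le (d : ℕ) (m₀ : ℝ) (n : ℕ) :
    ∀ s : ℕ, ∃ C : ℝ, 0 ≤ C ∧ ∀ m : ℝ, 0 < m → m ≤ m₀ →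
      ∀ φ : ℝ × Spc d → ℝ, ContDiff ℝ (⊤ : ℕ∞) φ → (∀ p, box m φ p = 0) → HasBallData φ →
      ∀ l : List (Fin d), l.length = n →
        dataNormSq s (boostList l φ) ≤ C * dataNormSq (s + n) φ := by
  induction n with
  | zero =>
    refine fun s => ⟨1, zero_le_one, fun m _ _ φ _ _ _ l hl => ?_⟩
    rw [List.length_eq_zero_iff.1 hl, one_mul]
    exact le_rfl
  | succ n ih =>
    intro s
    obtain ⟨C₁, hC₁, h₁⟩ := exists_HnormSq_boost_data_le d s m₀
    obtain ⟨C₂, hC₂, h₂⟩ := ih (s + 1)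
    refine ⟨C₁ * C₂, mul_nonneg hC₁ hC₂, fun m hm hmm φ hφ hbox hdata l hl => ?_⟩
    obtain _ | ⟨i, l⟩ := l
    · simp at hl
    · have hl' : l.length = n := by simpa using hl
      obtain ⟨k1, k2, k3⟩ := boostList_solution hφ hbox hdata l
      have e1 := h₁ m hm hmm i _ _ k3.zero k3.one
      have e2 := h₂ m hm hmm φ hφ hbox hdata l hl'
      have e3 : dataNormSq s (boostList (i :: l) φ) ≤ C₁ * dataNormSq (s + 1) (boostList l φ) := by
        refine le_trans (le_of_eq ?_) e1
        change dataNormSq s (boost i (boostList l φ)) = _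
        rw [dataNormSq]
        simp only [boost_data_zero i k1, boost_data_one m i k1 k2]
      refine e3.trans ?_
      rw [mul_assoc, show s + (n + 1) = s + 1 + n by ring]
      exact mul_le_mul_of_nonneg_left e2 hC₁

end CauchyData

section GraphFoliation

variable {d : ℕ}

theorem integral_dxs_eq_zero {f : Spc d → ℝ} (hf : ContDiff ℝ (⊤ : ℕ∞) f)
    (hc : HasCompactSupport f) (i : Fin d) : ∫ x, dxs i f x = 0 := by
  have hf' : Integrable (fun x => fderiv ℝ f x (EuclideanSpace.single i 1)) volume :=
    (contDiff_dxs hf i).continuous.integrable_of_hasCompactSupport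
      (hc.fderiv_apply ℝ (EuclideanSpace.single i 1))
  have h := integral_mul_fderiv_eq_neg_fderiv_mul_of_integrable (μ := (volume : Measure (Spc d)))
    (f := fun _ : Spc d => (1 : ℝ)) (g := f) (v := EuclideanSpace.single i 1) (by simp)
    (by simpa using hf') (by simpa using hf.continuous.integrable_of_hasCompactSupport hc)
    (fun _ _ => differentiableAt_const _) (fun x _ => hf.diffAt x)
  simp only [one_mul, fderiv_fun_const, Pi.zero_apply, zero_apply, zero_mul, integral_zero,
    neg_zero] at h
  exact h

theorem hasDerivAt_slice {G : ℝ × Spc d → ℝ} (hG : ContDiff ℝ (⊤ : ℕ∞) G) (s : ℝ) (x : Spc d) :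
    HasDerivAt (fun r => G (r, x)) (dt G (s, x)) s := by
  have h : HasFDerivAt (fun r : ℝ => G (r, x))
      ((fderiv ℝ G (s, x)).comp (ContinuousLinearMap.inl ℝ ℝ (Spc d))) s :=
    (hG.diffAt (s, x)).hasFDerivAt.comp s (hasFDerivAt_prodMk_left s x)
  simpa [dt] using h.hasDerivAt

theorem contDiff_slice {G : ℝ × Spc d → ℝ} (hG : ContDiff ℝ (⊤ : ℕ∞) G) (s : ℝ) :
    ContDiff ℝ (⊤ : ℕ∞) (fun x => G (s, x)) :=
  hG.comp (contDiff_const.prodMk contDiff_id)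

theorem hasCompactSupport_slice {G : ℝ × Spc d → ℝ} {K s : ℝ}
    (h : ∀ x, K < ‖x‖ → G (s, x) = 0) : HasCompactSupport (fun x => G (s, x)) :=
  HasCompactSupport.intro (isCompact_closedBall (0 : Spc d) K) fun x hx =>
    h x (by simpa using hx)

theorem hasDerivAt_integral_slice {G : ℝ × Spc d → ℝ} (hG : ContDiff ℝ (⊤ : ℕ∞) G) {a b K s : ℝ}
    (hs : s ∈ Set.Ioo a b) (h : ∀ r ∈ Set.Ioo a b, ∀ x, K < ‖x‖ → G (r, x) = 0) :
    Integrable (fun x => dt G (s, x)) ∧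
      HasDerivAt (fun r => ∫ x, G (r, x)) (∫ x, dt G (s, x)) s := by
  obtain ⟨M, hM⟩ := (isCompact_Icc.prod (isCompact_closedBall (0 : Spc d) K)
    : IsCompact (Set.Icc a b ×ˢ Metric.closedBall (0 : Spc d) K)).exists_bound_of_continuousOn
      (contDiff_dt hG).continuous.continuousOn
  have hmeas : ∀ r, AEStronglyMeasurable (fun x => G (r, x)) (volume : Measure (Spc d)) :=
    fun r => (contDiff_slice hG r).continuous.aestronglyMeasurable
  refine hasDerivAt_integral_of_dominated_loc_of_deriv_le (s := Set.Ioo a b)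
    (F := fun r x => G (r, x)) (F' := fun r x => dt G (r, x))
    (bound := (Metric.closedBall (0 : Spc d) K).indicator fun _ => M)
    (Ioo_mem_nhds hs.1 hs.2) (Filter.Eventually.of_forall hmeas) ?_
    (contDiff_slice (contDiff_dt hG) s).continuous.aestronglyMeasurable ?_ ?_ ?_
  · exact (contDiff_slice hG s).continuous.integrable_of_hasCompactSupport
      (hasCompactSupport_slice (h s hs))
  · refine Filter.Eventually.of_forall fun x r hr => ?_
    by_cases hx : x ∈ Metric.closedBall (0 : Spc d) K
    · rw [Set.indicator_of_mem hx]
      exact hM (r, x) ⟨Set.Ioo_subset_Icc_self hr, hx⟩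
    · rw [Set.indicator_of_notMem hx]
      have hx' : K < ‖x‖ := by simpa using hx
      have h0 : HasDerivAt (fun r => G (r, x)) 0 r := by
        refine (hasDerivAt_const r (0 : ℝ)).congr_of_eventuallyEq ?_
        filter_upwards [Ioo_mem_nhds hr.1 hr.2] with q hq using h q hq x hx'
      rw [(hasDerivAt_slice hG r x).unique h0, norm_zero]
  · exact (integrable_indicator_iff measurableSet_closedBall).2
      (integrableOn_const (isCompact_closedBall (0 : Spc d) K).measure_lt_top.ne)
  · exact Filter.Eventually.of_forall fun x r _ => hasDerivAt_slice hG r x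

/-- A density whose time derivative is dominated by a divergence has non-increasing integral. -/
theorem integral_slice_one_le_zero {G : ℝ × Spc d → ℝ} {V : Fin d → ℝ × Spc d → ℝ}
    (hG : ContDiff ℝ (⊤ : ℕ∞) G) (hV : ∀ i, ContDiff ℝ (⊤ : ℕ∞) (V i)) {K : ℝ}
    (hGK : ∀ r ∈ Set.Ioo (-1 / 2 : ℝ) 2, ∀ x, K < ‖x‖ → G (r, x) = 0)
    (hVK : ∀ i, ∀ r ∈ Set.Ioo (-1 / 2 : ℝ) 2, ∀ x, K < ‖x‖ → V i (r, x) = 0)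
    (hdiv : ∀ r ∈ Set.Icc (0 : ℝ) 1, ∀ x, dt G (r, x) + ∑ i, dx i (V i) (r, x) ≤ 0) :
    ∫ x, G (1, x) ≤ ∫ x, G (0, x) := by
  have hsub : ∀ r ∈ Set.Icc (0 : ℝ) 1, r ∈ Set.Ioo (-1 / 2 : ℝ) 2 := fun r hr =>
    ⟨by linarith [hr.1], by linarith [hr.2]⟩
  have hd := fun r (hr : r ∈ Set.Icc (0 : ℝ) 1) => hasDerivAt_integral_slice hG (hsub r hr) hGK
  have hanti : AntitoneOn (fun r => ∫ x, G (r, x)) (Set.Icc 0 1) := by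
    refine antitoneOn_of_deriv_nonpos (convex_Icc 0 1)
      (fun r hr => (hd r hr).2.continuousAt.continuousWithinAt)
      (fun r hr => (hd r (interior_subset hr)).2.differentiableAt.differentiableWithinAt)
      fun r hr => ?_
    have hr' := interior_subset hr
    rw [(hd r hr').2.deriv]
    have hcs : ∀ i, HasCompactSupport fun x => V i (r, x) := fun i =>
      hasCompactSupport_slice (hVK i r (hsub r hr'))
    have hVi : ∀ i, Integrable fun x => dxs i (fun y => V i (r, y)) x := fun i =>
      (contDiff_dxs (contDiff_slice (hV i) r) i).continuous.integrable_of_hasCompactSupport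
        ((hcs i).fderiv_apply ℝ (EuclideanSpace.single i 1))
    calc ∫ x, dt G (r, x) ≤ ∫ x, -∑ i, dxs i (fun y => V i (r, y)) x := by
          refine integral_mono (hd r hr').1 (integrable_finsetSum _ fun i _ => hVi i).neg fun x => ?_
          have := hdiv r hr' x
          simp only [dxs_slice _ r (hV _)]
          linarith
      _ = 0 := by
          rw [integral_neg, integral_finsetSum _ fun i _ => hVi i]
          simp [integral_dxs_eq_zero (contDiff_slice (hV _) r) (hcs _)]
  exact hanti (by simp) (by simp) zero_le_one

end GraphFoliation

section HyperboloidalFlux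

variable {d : ℕ}

/-- The height `√(τ² + |x|²)` of the hyperboloid, as a function on spacetime. -/
def hypHeight (τ : ℝ) (p : ℝ × Spc d) : ℝ := √(τ ^ 2 + ‖p.2‖ ^ 2)

theorem hypHeight_sq (τ : ℝ) (p : ℝ × Spc d) : hypHeight τ p ^ 2 = τ ^ 2 + ‖p.2‖ ^ 2 :=
  Real.sq_sqrt (by positivity)

theorem hypHeight_pos {τ : ℝ} (hτ : 0 < τ) (p : ℝ × Spc d) : 0 < hypHeight τ p :=
  Real.sqrt_pos.2 (by positivity)

theorem norm_le_hypHeight (τ : ℝ) (p : ℝ × Spc d) : ‖p.2‖ ≤ hypHeight τ p :=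
  Real.le_sqrt_of_sq_le (by nlinarith [sq_nonneg τ])

theorem contDiff_hypHeight {τ : ℝ} (hτ : 0 < τ) :
    ContDiff ℝ (⊤ : ℕ∞) (hypHeight (d := d) τ) :=
  (contDiff_const.add (contDiff_snd.norm_sq ℝ)).sqrt fun p => by positivity

theorem dirD_hypHeight {τ : ℝ} (hτ : 0 < τ) (v p : ℝ × Spc d) :
    dirD v (hypHeight τ) p = inner ℝ p.2 v.2 / hypHeight τ p := by
  have h1 : HasFDerivAt (fun p : ℝ × Spc d => τ ^ 2 + ‖p.2‖ ^ 2)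
      ((2 • (innerSL ℝ p.2)).comp (ContinuousLinearMap.snd ℝ ℝ (Spc d))) p :=
    ((hasStrictFDerivAt_norm_sq p.2).hasFDerivAt.comp p hasFDerivAt_snd).const_add _
  have h2 := h1.sqrt (by positivity)
  rw [dirD, show hypHeight (d := d) τ = fun p => √(τ ^ 2 + ‖p.2‖ ^ 2) from rfl, h2.fderiv]
  simp
  field_simp

/-- The slope `xⁱ / √(τ² + |x|²)` of the hyperboloid. -/
def hypSlope (τ : ℝ) (i : Fin d) (p : ℝ × Spc d) : ℝ := p.2 i / hypHeight τ p

theorem contDiff_hypSlope {τ : ℝ} (hτ : 0 < τ) (i : Fin d) :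
    ContDiff ℝ (⊤ : ℕ∞) (hypSlope τ i) :=
  (contDiff_snd_coord i).div (contDiff_hypHeight hτ) fun p => (hypHeight_pos hτ p).ne'

theorem dt_hypHeight {τ : ℝ} (hτ : 0 < τ) (p : ℝ × Spc d) : dt (hypHeight τ) p = 0 := by
  rw [dt_eq_dirD, dirD_hypHeight hτ]
  simp

theorem dx_hypHeight {τ : ℝ} (hτ : 0 < τ) (i : Fin d) (p : ℝ × Spc d) :
    dx i (hypHeight τ) p = hypSlope τ i p := by
  rw [dx_eq_dirD, dirD_hypHeight hτ, hypSlope]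
  simp [EuclideanSpace.inner_single_right]

theorem dt_hypSlope {τ : ℝ} (hτ : 0 < τ) (i : Fin d) (p : ℝ × Spc d) :
    dt (hypSlope τ i) p = 0 := by
  refine (hasDerivAt_slice (contDiff_hypSlope hτ i) p.1 p.2).unique ?_
  simp only [hypSlope, hypHeight]
  exact hasDerivAt_const _ _

theorem sum_coord_sq (x : Spc d) : ∑ i, x i ^ 2 = ‖x‖ ^ 2 := by
  simp [EuclideanSpace.real_norm_sq_eq]

theorem sum_hypSlope_sq_le_one {τ : ℝ} (hτ : 0 < τ) (p : ℝ × Spc d) :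
    ∑ i, hypSlope τ i p ^ 2 ≤ 1 := by
  simp only [hypSlope, div_pow, ← Finset.sum_div, sum_coord_sq]
  rw [div_le_one (pow_pos (hypHeight_pos hτ p) 2), hypHeight_sq]
  nlinarith [sq_nonneg τ]

/-- The graphs interpolating between `{t = 2}` (at `s = 0`) and the hyperboloid (at `s = 1`),
as a map `(s, x) ↦ (t, x)`. -/
def graphMap (τ : ℝ) (p : ℝ × Spc d) : ℝ × Spc d := (2 + p.1 * (hypHeight τ p - 2), p.2)

theorem contDiff_graphMap {τ : ℝ} (hτ : 0 < τ) :
    ContDiff ℝ (⊤ : ℕ∞) (graphMap (d := d) τ) :=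
  (contDiff_const.add (contDiff_fst.mul ((contDiff_hypHeight hτ).sub contDiff_const))).prodMk
    contDiff_snd

theorem graphMap_one (τ : ℝ) (x : Spc d) : graphMap τ (1, x) = (√(τ ^ 2 + ‖x‖ ^ 2), x) := by
  simp [graphMap, hypHeight]

theorem graphMap_zero (τ : ℝ) (x : Spc d) : graphMap τ (0, x) = (2, x) := by
  simp [graphMap]

/-- Pullback of a spacetime function to the interpolating graphs. -/
def pull (τ : ℝ) (F : ℝ × Spc d → ℝ) (p : ℝ × Spc d) : ℝ := F (graphMap τ p)

theorem contDiff_pull {τ : ℝ} (hτ : 0 < τ) {F : ℝ × Spc d → ℝ} (hF : ContDiff ℝ (⊤ : ℕ∞) F) :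
    ContDiff ℝ (⊤ : ℕ∞) (pull τ F) :=
  hF.comp (contDiff_graphMap hτ)

theorem contDiff_hypHeight_sub {τ : ℝ} (hτ : 0 < τ) :
    ContDiff ℝ (⊤ : ℕ∞) (fun p : ℝ × Spc d => hypHeight τ p - 2) :=
  (contDiff_hypHeight hτ).sub contDiff_const

theorem dirD_hypHeight_sub {τ : ℝ} (v p : ℝ × Spc d) :
    dirD v (fun p : ℝ × Spc d => hypHeight τ p - 2) p = dirD v (hypHeight τ) p := by
  simp [dirD, fderiv_sub_const]

theorem dirD_pull {τ : ℝ} (hτ : 0 < τ) {F : ℝ × Spc d → ℝ} (hF : ContDiff ℝ (⊤ : ℕ∞) F)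
    (v p : ℝ × Spc d) :
    dirD v (pull τ F) p
      = (v.1 * (hypHeight τ p - 2) + p.1 * dirD v (hypHeight τ) p) * pull τ (dt F) p
        + pull τ (dirD (0, v.2) F) p := by
  set c := v.1 * (hypHeight τ p - 2) + p.1 * dirD v (hypHeight τ) p with hc
  have hfst : dirD v (fun p : ℝ × Spc d => 2 + p.1 * (hypHeight τ p - 2)) p = c := by
    rw [dirD_add v contDiff_const (contDiff_fst_coord.mul (contDiff_hypHeight_sub hτ)),
      dirD_const, dirD_mul v contDiff_fst_coord (contDiff_hypHeight_sub hτ), dirD_fst_coord,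
      dirD_hypHeight_sub, zero_add]
  have hs : ContDiff ℝ (⊤ : ℕ∞) (fun p : ℝ × Spc d => 2 + p.1 * (hypHeight τ p - 2)) :=
    contDiff_const.add (contDiff_fst_coord.mul (contDiff_hypHeight_sub hτ))
  have hg : HasFDerivAt (graphMap (d := d) τ)
      ((fderiv ℝ (fun p : ℝ × Spc d => 2 + p.1 * (hypHeight τ p - 2)) p).prod
        (ContinuousLinearMap.snd ℝ ℝ (Spc d))) p :=
    (hs.diffAt p).hasFDerivAt.prodMk hasFDerivAt_snd
  have h := ((hF.diffAt (graphMap τ p)).hasFDerivAt.comp p hg).fderiv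
  have h' : dirD v (pull τ F) p = fderiv ℝ F (graphMap τ p) (c, v.2) := by
    rw [← hfst]
    exact congrArg (fun L => L v) h
  have hv : ((c, v.2) : ℝ × Spc d) = c • (1, 0) + (0, v.2) := by simp
  rw [h', hv, map_add, map_smul]
  rfl

theorem dt_pull {τ : ℝ} (hτ : 0 < τ) {F : ℝ × Spc d → ℝ} (hF : ContDiff ℝ (⊤ : ℕ∞) F)
    (p : ℝ × Spc d) : dt (pull τ F) p = (hypHeight τ p - 2) * pull τ (dt F) p := by
  have h0 : pull τ (dirD (0, 0) F) p = 0 := map_zero (fderiv ℝ F (graphMap τ p))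
  rw [dt_eq_dirD, dirD_pull hτ hF, ← dt_eq_dirD, dt_hypHeight hτ, h0]
  ring

theorem dx_pull {τ : ℝ} (hτ : 0 < τ) {F : ℝ × Spc d → ℝ} (hF : ContDiff ℝ (⊤ : ℕ∞) F)
    (i : Fin d) (p : ℝ × Spc d) :
    dx i (pull τ F) p = p.1 * hypSlope τ i p * pull τ (dt F) p + pull τ (dx i F) p := by
  rw [dx_eq_dirD, dirD_pull hτ hF, ← dx_eq_dirD, dx_hypHeight hτ, ← dx_eq_dirD]
  ring

/-- The flux density of the energy current of `ψ` through the interpolating graphs. -/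
def fluxDensity (m τ : ℝ) (ψ : ℝ × Spc d → ℝ) (p : ℝ × Spc d) : ℝ :=
  (pull τ (dt ψ) p ^ 2 + ∑ i, pull τ (dx i ψ) p ^ 2 + m ^ 2 * pull τ ψ p ^ 2)
    + 2 * (p.1 * (pull τ (dt ψ) p * ∑ i, hypSlope τ i p * pull τ (dx i ψ) p))

/-- The spatial flux exchanged when the interpolating graphs are moved. -/
def lateralFlux (τ : ℝ) (ψ : ℝ × Spc d → ℝ) (i : Fin d) (p : ℝ × Spc d) : ℝ :=
  -2 * ((hypHeight τ p - 2) * (pull τ (dt ψ) p * pull τ (dx i ψ) p))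

variable {m τ : ℝ} {ψ : ℝ × Spc d → ℝ}

theorem contDiff_fluxDensity (hτ : 0 < τ) (hψ : ContDiff ℝ (⊤ : ℕ∞) ψ) :
    ContDiff ℝ (⊤ : ℕ∞) (fluxDensity m τ ψ) := by
  have ha := contDiff_pull hτ (contDiff_dt hψ)
  have hb := fun i => contDiff_pull hτ (contDiff_dx i hψ)
  have hu := contDiff_pull hτ hψ
  exact (((ha.pow 2).add (ContDiff.sum fun i _ => (hb i).pow 2)).add
    (contDiff_const.mul (hu.pow 2))).add (contDiff_const.mul (contDiff_fst_coord.mul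
      (ha.mul (ContDiff.sum fun i _ => (contDiff_hypSlope hτ i).mul (hb i)))))

theorem contDiff_lateralFlux (hτ : 0 < τ) (hψ : ContDiff ℝ (⊤ : ℕ∞) ψ) (i : Fin d) :
    ContDiff ℝ (⊤ : ℕ∞) (lateralFlux τ ψ i) :=
  contDiff_const.mul ((contDiff_hypHeight_sub hτ).mul
    ((contDiff_pull hτ (contDiff_dt hψ)).mul (contDiff_pull hτ (contDiff_dx i hψ))))

theorem dt_fluxDensity (hτ : 0 < τ) (hψ : ContDiff ℝ (⊤ : ℕ∞) ψ) (p : ℝ × Spc d) :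
    dt (fluxDensity m τ ψ) p
      = (2 * pull τ (dt ψ) p * dt (pull τ (dt ψ)) p
        + ∑ i, 2 * pull τ (dx i ψ) p * dt (pull τ (dx i ψ)) p
        + m ^ 2 * (2 * pull τ ψ p * dt (pull τ ψ) p))
      + 2 * (pull τ (dt ψ) p * ∑ i, hypSlope τ i p * pull τ (dx i ψ) p
        + p.1 * (dt (pull τ (dt ψ)) p * ∑ i, hypSlope τ i p * pull τ (dx i ψ) p
          + pull τ (dt ψ) p * ∑ i, hypSlope τ i p * dt (pull τ (dx i ψ)) p)) := by
  have ha := contDiff_pull hτ (contDiff_dt hψ)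
  have hb := fun i => contDiff_pull hτ (contDiff_dx i hψ)
  have hu := contDiff_pull hτ hψ
  have hr := contDiff_hypSlope (d := d) hτ
  have hS : ContDiff ℝ (⊤ : ℕ∞) fun p => ∑ i, hypSlope τ i p * pull τ (dx i ψ) p :=
    ContDiff.sum fun i _ => (hr i).mul (hb i)
  have hbs : ContDiff ℝ (⊤ : ℕ∞) fun p => ∑ i, pull τ (dx i ψ) p ^ 2 :=
    ContDiff.sum fun i _ => (hb i).pow 2
  have hdS : dirD (1, 0) (fun p => ∑ i, hypSlope τ i p * pull τ (dx i ψ) p) p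
      = ∑ i, hypSlope τ i p * dt (pull τ (dx i ψ)) p := by
    rw [dirD_sum _ _ fun i => (hr i).mul (hb i)]
    refine Finset.sum_congr rfl fun i _ => ?_
    rw [dirD_mul _ (hr i) (hb i), ← dt_eq_dirD, dt_hypSlope hτ, ← dt_eq_dirD]
    ring
  rw [dt_eq_dirD, show fluxDensity m τ ψ = fun p =>
    (pull τ (dt ψ) p ^ 2 + ∑ i, pull τ (dx i ψ) p ^ 2 + m ^ 2 * pull τ ψ p ^ 2)
    + 2 * (p.1 * (pull τ (dt ψ) p * ∑ i, hypSlope τ i p * pull τ (dx i ψ) p)) from rfl,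
    dirD_add _ (((ha.pow 2).add hbs).add (contDiff_const.mul (hu.pow 2)))
      (contDiff_const.mul (contDiff_fst_coord.mul (ha.mul hS))),
    dirD_add _ ((ha.pow 2).add hbs) (contDiff_const.mul (hu.pow 2)),
    dirD_add _ (ha.pow 2) hbs, dirD_sq _ ha, dirD_sum _ _ fun i => (hb i).pow 2,
    dirD_const_mul _ (hu.pow 2), dirD_sq _ hu,
    dirD_const_mul _ (contDiff_fst_coord.mul (ha.mul hS)),
    dirD_mul _ contDiff_fst_coord (ha.mul hS), dirD_fst_coord, dirD_mul _ ha hS, hdS,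
    Finset.sum_congr rfl fun i _ => dirD_sq _ (hb i) p]
  simp only [← dt_eq_dirD, one_mul]

theorem dx_lateralFlux (hτ : 0 < τ) (hψ : ContDiff ℝ (⊤ : ℕ∞) ψ) (i : Fin d) (p : ℝ × Spc d) :
    dx i (lateralFlux τ ψ i) p
      = -2 * (hypSlope τ i p * (pull τ (dt ψ) p * pull τ (dx i ψ) p)
        + (hypHeight τ p - 2) * (dx i (pull τ (dt ψ)) p * pull τ (dx i ψ) p
          + pull τ (dt ψ) p * dx i (pull τ (dx i ψ)) p)) := by
  have ha := contDiff_pull hτ (contDiff_dt hψ)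
  have hb := contDiff_pull hτ (contDiff_dx i hψ)
  have hh := contDiff_hypHeight_sub (d := d) hτ
  rw [dx_eq_dirD, show lateralFlux τ ψ i = fun p =>
    -2 * ((hypHeight τ p - 2) * (pull τ (dt ψ) p * pull τ (dx i ψ) p)) from rfl,
    dirD_const_mul _ (hh.mul (ha.mul hb)), dirD_mul _ hh (ha.mul hb), dirD_mul _ ha hb,
    dirD_hypHeight_sub, ← dx_eq_dirD, dx_hypHeight hτ, ← dx_eq_dirD, ← dx_eq_dirD]

/-- Conservation of the energy current, in the coordinates of the interpolating graphs. -/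
theorem flux_conservation (hτ : 0 < τ) (hψ : ContDiff ℝ (⊤ : ℕ∞) ψ)
    (hbox : ∀ p, box m ψ p = 0) (p : ℝ × Spc d) :
    dt (fluxDensity m τ ψ) p + ∑ i, dx i (lateralFlux τ ψ i) p = 0 := by
  rw [dt_fluxDensity hτ hψ, Finset.sum_congr rfl fun i _ => dx_lateralFlux hτ hψ i p]
  simp only [dt_pull hτ (contDiff_dt hψ), dt_pull hτ hψ, dt_pull hτ (contDiff_dx _ hψ),
    dx_pull hτ (contDiff_dt hψ), dx_pull hτ (contDiff_dx _ hψ), dt_dx_comm _ hψ]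
  have hkg : pull τ (dt (dt ψ)) p
      = ∑ i, pull τ (dx i (dx i ψ)) p - m ^ 2 * pull τ ψ p := by
    have := hbox (graphMap τ p)
    rw [box] at this
    simp only [pull]
    linarith
  simp only [Finset.mul_sum]
  rw [← sub_eq_zero] at hkg
  have hsum : ∑ i, (2 * pull τ (dx i ψ) p * ((hypHeight τ p - 2) * pull τ (dx i (dt ψ)) p)
      + 2 * (pull τ (dt ψ) p * (hypSlope τ i p * pull τ (dx i ψ) p))
      + 2 * p.1 * ((hypHeight τ p - 2) * pull τ (dt (dt ψ)) p
          * (hypSlope τ i p * pull τ (dx i ψ) p))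
      + 2 * p.1 * (pull τ (dt ψ) p
          * (hypSlope τ i p * ((hypHeight τ p - 2) * pull τ (dx i (dt ψ)) p)))
      + -2 * (hypSlope τ i p * (pull τ (dt ψ) p * pull τ (dx i ψ) p)
        + (hypHeight τ p - 2) * ((p.1 * hypSlope τ i p * pull τ (dt (dt ψ)) p
            + pull τ (dx i (dt ψ)) p) * pull τ (dx i ψ) p
          + pull τ (dt ψ) p * (p.1 * hypSlope τ i p * pull τ (dx i (dt ψ)) p
            + pull τ (dx i (dx i ψ)) p))))
      = -2 * (hypHeight τ p - 2) * pull τ (dt ψ) p * ∑ i, pull τ (dx i (dx i ψ)) p := by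
    rw [Finset.mul_sum]
    exact Finset.sum_congr rfl fun i _ => by ring
  simp only [Finset.sum_add_distrib, ← Finset.mul_sum] at hsum ⊢
  linear_combination hsum + 2 * (hypHeight τ p - 2) * pull τ (dt ψ) p * hkg

/-- A spatially compact cutoff decreasing towards the future along the graphs. -/
def coneCutoff (R τ : ℝ) (p : ℝ × Spc d) : ℝ :=
  Real.smoothTransition (R - 2 + 2 * p.1 + -1 * ((1 + p.1) * hypHeight τ p))

theorem contDiff_coneArg (hτ : 0 < τ) (R : ℝ) : ContDiff ℝ (⊤ : ℕ∞)
    (fun p : ℝ × Spc d => R - 2 + 2 * p.1 + -1 * ((1 + p.1) * hypHeight τ p)) :=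
  (contDiff_const.add (contDiff_const.mul contDiff_fst_coord)).add (contDiff_const.mul
    ((contDiff_const.add contDiff_fst_coord).mul (contDiff_hypHeight hτ)))

theorem contDiff_coneCutoff (hτ : 0 < τ) (R : ℝ) :
    ContDiff ℝ (⊤ : ℕ∞) (coneCutoff (d := d) R τ) :=
  Real.smoothTransition.contDiff.comp (contDiff_coneArg hτ R)

theorem dirD_coneCutoff (hτ : 0 < τ) (R : ℝ) (v p : ℝ × Spc d) :
    dirD v (coneCutoff R τ) p
      = deriv Real.smoothTransition (R - 2 + 2 * p.1 + -1 * ((1 + p.1) * hypHeight τ p))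
        * (2 * v.1 - (v.1 * hypHeight τ p + (1 + p.1) * dirD v (hypHeight τ) p)) := by
  have hs : DifferentiableAt ℝ Real.smoothTransition
      (R - 2 + 2 * p.1 + -1 * ((1 + p.1) * hypHeight τ p)) :=
    (Real.smoothTransition.contDiff (n := 1)).differentiable (by simp) _
  have h := hs.hasDerivAt.comp_hasFDerivAt p ((contDiff_coneArg hτ R).diffAt p).hasFDerivAt
  have h2 : dirD v (fun p : ℝ × Spc d => R - 2 + 2 * p.1 + -1 * ((1 + p.1) * hypHeight τ p)) p
      = 2 * v.1 - (v.1 * hypHeight τ p + (1 + p.1) * dirD v (hypHeight τ) p) := by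
    have h1 : ContDiff ℝ (⊤ : ℕ∞) (fun p : ℝ × Spc d => 1 + p.1) :=
      contDiff_const.add contDiff_fst_coord
    rw [dirD_add _ (contDiff_const.add (contDiff_const.mul contDiff_fst_coord))
        (contDiff_const.mul (h1.mul (contDiff_hypHeight hτ))),
      dirD_add _ contDiff_const (contDiff_const.mul contDiff_fst_coord), dirD_const,
      dirD_const_mul _ contDiff_fst_coord, dirD_const_mul _ (h1.mul (contDiff_hypHeight hτ)),
      dirD_mul _ h1 (contDiff_hypHeight hτ), dirD_add _ contDiff_const contDiff_fst_coord,
      dirD_const, dirD_fst_coord]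
    ring
  rw [← h2]
  exact congrArg (fun L => L v) h.fderiv

theorem coneCutoff_eq_zero {R s : ℝ} (hR : 0 ≤ R) (hs : s ∈ Set.Ioo (-1 / 2 : ℝ) 2) {x : Spc d}
    (hx : 2 * (R + 2) < ‖x‖) : coneCutoff R τ (s, x) = 0 := by
  refine Real.smoothTransition.zero_of_nonpos ?_
  have h1 := norm_le_hypHeight τ (s, x)
  have h2 := hs.1
  have h3 := hs.2
  simp only at h1 ⊢
  nlinarith

theorem deriv_smoothTransition_mul_nonneg {R : ℝ} (hR : 5 ≤ R) {s : ℝ}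
    (hs : s ∈ Set.Icc (0 : ℝ) 1) (h : ℝ) :
    0 ≤ deriv Real.smoothTransition (R - 2 + 2 * s + -1 * ((1 + s) * h)) * (h - 2) := by
  obtain ⟨h0, h1⟩ := hs
  rcases le_or_gt 2 h with h2 | h2
  · exact mul_nonneg Real.smoothTransition.monotone.deriv_nonneg (by linarith)
  · have harg : 1 < R - 2 + 2 * s + -1 * ((1 + s) * h) := by nlinarith
    have : Real.smoothTransition =ᶠ[nhds (R - 2 + 2 * s + -1 * ((1 + s) * h))] fun _ => 1 := by
      filter_upwards [lt_mem_nhds harg] with y hy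
      exact Real.smoothTransition.one_of_one_le hy.le
    rw [this.deriv_eq]
    simp

theorem flux_cutoff_le (hτ : 0 < τ) (hψ : ContDiff ℝ (⊤ : ℕ∞) ψ)
    (hbox : ∀ p, box m ψ p = 0) {R : ℝ} (hR : 5 ≤ R) (p : ℝ × Spc d)
    (hp : p.1 ∈ Set.Icc (0 : ℝ) 1) :
    dt (fun q => fluxDensity m τ ψ q * coneCutoff R τ q) p
      + ∑ i, dx i (fun q => lateralFlux τ ψ i q * coneCutoff R τ q) p ≤ 0 := by
  have hc := contDiff_coneCutoff (d := d) hτ R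
  have hcons := flux_conservation hτ hψ hbox p
  have hS := deriv_smoothTransition_mul_nonneg hR hp (hypHeight τ p)
  set S := deriv Real.smoothTransition (R - 2 + 2 * p.1 + -1 * ((1 + p.1) * hypHeight τ p))
  have ht : dt (coneCutoff R τ) p = S * (2 - hypHeight τ p) := by
    rw [dt_eq_dirD, dirD_coneCutoff hτ, ← dt_eq_dirD, dt_hypHeight hτ]
    ring
  have hx : ∀ i, dx i (coneCutoff R τ) p = -S * ((1 + p.1) * hypSlope τ i p) := by
    intro i
    rw [dx_eq_dirD, dirD_coneCutoff hτ, ← dx_eq_dirD, dx_hypHeight hτ]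
    ring
  have e1 : dt (fun q => fluxDensity m τ ψ q * coneCutoff R τ q) p
      = dt (fluxDensity m τ ψ) p * coneCutoff R τ p
        + fluxDensity m τ ψ p * (S * (2 - hypHeight τ p)) := by
    rw [← ht]
    exact dirD_mul _ (contDiff_fluxDensity hτ hψ) hc p
  have e2 : ∀ i, dx i (fun q => lateralFlux τ ψ i q * coneCutoff R τ q) p
      = dx i (lateralFlux τ ψ i) p * coneCutoff R τ p
        + lateralFlux τ ψ i p * (-S * ((1 + p.1) * hypSlope τ i p)) := by
    intro i
    rw [← hx]
    exact dirD_mul _ (contDiff_lateralFlux hτ hψ i) hc p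
  set a := pull τ (dt ψ) p with ha
  have hpos : 0 ≤ a ^ 2 + ∑ i, pull τ (dx i ψ) p ^ 2 + m ^ 2 * pull τ ψ p ^ 2
      - 2 * (a * ∑ i, hypSlope τ i p * pull τ (dx i ψ) p) := by
    have h1 : 0 ≤ ∑ i, (pull τ (dx i ψ) p - hypSlope τ i p * a) ^ 2 :=
      Finset.sum_nonneg fun _ _ => sq_nonneg _
    have h2 : ∑ i, (pull τ (dx i ψ) p - hypSlope τ i p * a) ^ 2
        = ∑ i, pull τ (dx i ψ) p ^ 2 - 2 * (a * ∑ i, hypSlope τ i p * pull τ (dx i ψ) p)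
          + a ^ 2 * ∑ i, hypSlope τ i p ^ 2 := by
      simp only [Finset.mul_sum]
      rw [← Finset.sum_sub_distrib, ← Finset.sum_add_distrib]
      exact Finset.sum_congr rfl fun i _ => by ring
    have h3 := mul_le_mul_of_nonneg_left (sum_hypSlope_sq_le_one hτ p) (sq_nonneg a)
    have h4 : 0 ≤ m ^ 2 * pull τ ψ p ^ 2 := by positivity
    linarith
  have e3 : ∑ i, lateralFlux τ ψ i p * (-S * ((1 + p.1) * hypSlope τ i p))
      = 2 * (S * (hypHeight τ p - 2)) * ((1 + p.1)
        * (a * ∑ i, hypSlope τ i p * pull τ (dx i ψ) p)) := by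
    simp only [Finset.mul_sum, lateralFlux]
    exact Finset.sum_congr rfl fun i _ => by ring
  rw [e1, Finset.sum_congr rfl fun i _ => e2 i, Finset.sum_add_distrib, ← Finset.sum_mul, e3,
    fluxDensity]
  have h5 := mul_nonneg hS hpos
  linear_combination coneCutoff R τ p * hcons + h5

theorem energy_eq_integral_fluxDensity (hτ : 0 < τ) (m : ℝ) (ψ : ℝ × Spc d → ℝ) :
    energy m τ ψ = ∫ x : Spc d, fluxDensity m τ ψ (1, x) := by
  refine integral_congr_ae (Filter.Eventually.of_forall fun x => ?_)
  have hr : hypHeight τ ((1 : ℝ), x) = √(τ ^ 2 + ‖x‖ ^ 2) := rfl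
  have hpos := hypHeight_pos hτ ((1 : ℝ), x)
  have hsq := hypHeight_sq τ ((1 : ℝ), x)
  simp only [fluxDensity, pull, graphMap_one, hypSlope, boost]
  rw [hr] at *
  set t := √(τ ^ 2 + ‖x‖ ^ 2)
  have h1 : ∑ i, (x i * dt ψ (t, x) + t * dx i ψ (t, x)) ^ 2
      = ‖x‖ ^ 2 * dt ψ (t, x) ^ 2 + 2 * t * dt ψ (t, x) * ∑ i, x i * dx i ψ (t, x)
        + t ^ 2 * ∑ i, dx i ψ (t, x) ^ 2 := by
    rw [← sum_coord_sq, Finset.sum_mul, Finset.mul_sum, Finset.mul_sum,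
      ← Finset.sum_add_distrib, ← Finset.sum_add_distrib]
    exact Finset.sum_congr rfl fun i _ => by ring
  have h2 : ∑ i, x i / t * dx i ψ (t, x) = (∑ i, x i * dx i ψ (t, x)) / t := by
    rw [Finset.sum_div]
    exact Finset.sum_congr rfl fun i _ => by ring
  rw [h1, h2, show ‖x‖ ^ 2 = t ^ 2 - τ ^ 2 by linarith]
  field_simp
  ring

theorem fluxDensity_zero (hψ : ContDiff ℝ (⊤ : ℕ∞) ψ) (x : Spc d) :
    fluxDensity m τ ψ (0, x)
      = dt ψ (2, x) ^ 2 + ∑ i, dxs i (fun y => ψ (2, y)) x ^ 2 + m ^ 2 * ψ (2, x) ^ 2 := by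
  simp [fluxDensity, pull, graphMap_zero, dxs_slice _ _ hψ]

theorem dxs_sq_le_norm_iteratedFDeriv_sq {f : Spc d → ℝ} (hf : BallData f) (i : Fin d) (x : Spc d) :
    dxs i f x ^ 2 ≤ ‖iteratedFDeriv ℝ 1 f x‖ ^ 2 := by
  have h := norm_iteratedFDeriv_dxs_le hf.smooth i 0 x
  rw [norm_iteratedFDeriv_zero, Real.norm_eq_abs, zero_add] at h
  exact sq_le_sq' (by linarith [neg_abs_le (dxs i f x)]) ((le_abs_self _).trans h)

theorem integral_fluxDensity_zero_le (hψ : ContDiff ℝ (⊤ : ℕ∞) ψ) (h : HasBallData ψ) :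
    Integrable (fun x => fluxDensity m τ ψ (0, x)) ∧
      ∫ x, fluxDensity m τ ψ (0, x) ≤ (1 + d + m ^ 2) * dataNormSq 0 ψ := by
  have hf0 := h.zero.integrable_norm_iteratedFDeriv_sq 0
  have hf1 := h.zero.integrable_norm_iteratedFDeriv_sq 1
  have hg0 := h.one.integrable_norm_iteratedFDeriv_sq 0
  have hsum₁ : Integrable fun x => ‖iteratedFDeriv ℝ 0 (fun x => dt ψ (2, x)) x‖ ^ 2
      + d * ‖iteratedFDeriv ℝ 1 (fun x => ψ (2, x)) x‖ ^ 2 := hg0.add (hf1.const_mul (d : ℝ))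
  have hsum : Integrable fun x => ‖iteratedFDeriv ℝ 0 (fun x => dt ψ (2, x)) x‖ ^ 2
      + d * ‖iteratedFDeriv ℝ 1 (fun x => ψ (2, x)) x‖ ^ 2
      + m ^ 2 * ‖iteratedFDeriv ℝ 0 (fun x => ψ (2, x)) x‖ ^ 2 :=
    hsum₁.add (hf0.const_mul (m ^ 2))
  have hle : ∀ x, fluxDensity m τ ψ (0, x)
      ≤ ‖iteratedFDeriv ℝ 0 (fun x => dt ψ (2, x)) x‖ ^ 2
        + d * ‖iteratedFDeriv ℝ 1 (fun x => ψ (2, x)) x‖ ^ 2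
        + m ^ 2 * ‖iteratedFDeriv ℝ 0 (fun x => ψ (2, x)) x‖ ^ 2 := by
    intro x
    have h1 := Finset.sum_le_card_nsmul Finset.univ _ _ fun i _ => dxs_sq_le_norm_iteratedFDeriv_sq h.zero i x
    simp only [Finset.card_univ, Fintype.card_fin, nsmul_eq_mul] at h1
    rw [fluxDensity_zero hψ, norm_iteratedFDeriv_zero, norm_iteratedFDeriv_zero,
      Real.norm_eq_abs, Real.norm_eq_abs, sq_abs, sq_abs]
    gcongr
  have hnn : ∀ x, 0 ≤ fluxDensity m τ ψ (0, x) := fun x => by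
    rw [fluxDensity_zero hψ]
    positivity
  have hcont : Continuous fun x => fluxDensity m τ ψ (0, x) := by
    simp only [fluxDensity_zero hψ]
    have c1 := h.one.smooth.continuous
    have c2 := h.zero.smooth.continuous
    have c3 := fun i => (h.zero.dxs i).smooth.continuous
    fun_prop
  refine ⟨hsum.mono' hcont.aestronglyMeasurable (Filter.Eventually.of_forall fun x => ?_), ?_⟩
  · rw [Real.norm_of_nonneg (hnn x)]
    exact hle x
  · refine (integral_mono_of_nonneg (Filter.Eventually.of_forall hnn) hsum
      (Filter.Eventually.of_forall hle)).trans ?_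
    rw [integral_add hsum₁ (hf0.const_mul (m ^ 2)),
      integral_add hg0 (hf1.const_mul (d : ℝ)), integral_const_mul, integral_const_mul]
    simp only [dataNormSq, HnormSq, Finset.sum_range_succ, Finset.sum_range_zero, zero_add]
    have n0 : 0 ≤ ∫ x, ‖iteratedFDeriv ℝ 0 (fun x => ψ (2, x)) x‖ ^ 2 :=
      integral_nonneg fun _ => sq_nonneg _
    have n1 : 0 ≤ ∫ x, ‖iteratedFDeriv ℝ 1 (fun x => ψ (2, x)) x‖ ^ 2 :=
      integral_nonneg fun _ => sq_nonneg _
    have n2 : 0 ≤ ∫ x, ‖iteratedFDeriv ℝ 0 (fun x => dt ψ (2, x)) x‖ ^ 2 :=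
      integral_nonneg fun _ => sq_nonneg _
    nlinarith [mul_nonneg (Nat.cast_nonneg (α := ℝ) d) n0, mul_nonneg (sq_nonneg m) n1,
      mul_nonneg (Nat.cast_nonneg (α := ℝ) d) n2, mul_nonneg (sq_nonneg m) n2]

theorem integral_fluxDensity_cutoff_le (hτ : 0 < τ) (hψ : ContDiff ℝ (⊤ : ℕ∞) ψ)
    (hbox : ∀ p, box m ψ p = 0) (h : HasBallData ψ) {R : ℝ} (hR : 5 ≤ R) :
    ∫ x, fluxDensity m τ ψ (1, x) * coneCutoff R τ (1, x)
      ≤ ∫ x, fluxDensity m τ ψ (0, x) := by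
  have hc := contDiff_coneCutoff (d := d) hτ R
  have hzero : ∀ r ∈ Set.Ioo (-1 / 2 : ℝ) 2, ∀ x : Spc d, 2 * (R + 2) < ‖x‖ →
      coneCutoff R τ (r, x) = 0 := fun r hr x hx => coneCutoff_eq_zero (by linarith) hr hx
  refine (integral_slice_one_le_zero (K := 2 * (R + 2))
    (G := fun q => fluxDensity m τ ψ q * coneCutoff R τ q)
    ((contDiff_fluxDensity hτ hψ).mul hc)
    (V := fun i q => lateralFlux τ ψ i q * coneCutoff R τ q)
    (fun i => (contDiff_lateralFlux hτ hψ i).mul hc)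
    (fun r hr x hx => by simp [hzero r hr x hx]) (fun i r hr x hx => by simp [hzero r hr x hx])
    fun r hr x => flux_cutoff_le hτ hψ hbox hR (r, x) hr).trans ?_
  have hnn : ∀ x, 0 ≤ fluxDensity m τ ψ (0, x) := fun x => by
    rw [fluxDensity_zero hψ]
    positivity
  refine integral_mono_of_nonneg (Filter.Eventually.of_forall fun x =>
    mul_nonneg (hnn x) (Real.smoothTransition.nonneg _))
    (integral_fluxDensity_zero_le hψ h).1 (Filter.Eventually.of_forall fun x => ?_)
  exact mul_le_of_le_one_right (hnn x) (Real.smoothTransition.le_one _)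

/-- The hyperboloidal energy is bounded by the energy of the Cauchy data on `{t = 2}`. -/
theorem energy_le (hτ : 0 < τ) (hψ : ContDiff ℝ (⊤ : ℕ∞) ψ)
    (hbox : ∀ p, box m ψ p = 0) (h : HasBallData ψ) :
    energy m τ ψ ≤ ∫ x, fluxDensity m τ ψ (0, x) := by
  rw [energy_eq_integral_fluxDensity hτ]
  by_cases hint : Integrable fun x => fluxDensity m τ ψ (1, x)
  · have hlim : Filter.Tendsto
        (fun n : ℕ => ∫ x, fluxDensity m τ ψ (1, x) * coneCutoff n τ (1, x)) Filter.atTop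
        (nhds (∫ x, fluxDensity m τ ψ (1, x))) := by
      refine tendsto_integral_of_dominated_convergence
        (fun x => ‖fluxDensity m τ ψ (1, x)‖) (fun n => ?_) hint.norm (fun n => ?_) ?_
      · exact (contDiff_slice ((contDiff_fluxDensity hτ hψ).mul
          (contDiff_coneCutoff hτ n)) 1).continuous.aestronglyMeasurable
      · refine Filter.Eventually.of_forall fun x => ?_
        rw [norm_mul]
        refine mul_le_of_le_one_right (norm_nonneg _) ?_
        rw [coneCutoff, Real.norm_of_nonneg (Real.smoothTransition.nonneg _)]
        exact Real.smoothTransition.le_one _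
      · refine Filter.Eventually.of_forall fun x => tendsto_const_nhds.congr' ?_
        filter_upwards [Filter.eventually_ge_atTop ⌈1 + 2 * hypHeight τ ((1 : ℝ), x)⌉₊] with n hn
        have hn' := Nat.ceil_le.1 hn
        rw [coneCutoff, Real.smoothTransition.one_of_one_le (by simp only; linarith), mul_one]
    refine le_of_tendsto hlim ?_
    filter_upwards [Filter.eventually_ge_atTop 5] with n hn
    exact integral_fluxDensity_cutoff_le hτ hψ hbox h (by exact_mod_cast hn)
  · rw [integral_undef hint]
    refine integral_nonneg fun x => ?_
    simp only [Pi.zero_apply, fluxDensity_zero hψ]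
    positivity

end HyperboloidalFlux


/-- for data supported in the unit ball and k ≤ ⌊d/2⌋ + 1, the
hyperboloidal energies of iterated boosts of the solution are controlled by Sobolev
norms of the data, uniformly in τ and in m ≤ m₀. -/
theorem boosted_energy_bound (d : ℕ) (hd : 1 ≤ d) (m₀ : ℝ) (hm₀ : 0 < m₀) :
    ∃ C : ℝ, 0 < C ∧
      ∀ (m : ℝ), 0 < m → m ≤ m₀ →
      ∀ (φ : ℝ × Spc d → ℝ), ContDiff ℝ (⊤ : ℕ∞) φ →
        (∀ p : ℝ × Spc d, box m φ p = 0) →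
      ∀ (f g : Spc d → ℝ), ContDiff ℝ (⊤ : ℕ∞) f → ContDiff ℝ (⊤ : ℕ∞) g →
        tsupport f ⊆ Metric.ball 0 1 → tsupport g ⊆ Metric.ball 0 1 →
        (∀ x, φ (2, x) = f x) → (∀ x, dt φ (2, x) = g x) →
      ∀ (l : List (Fin d)), l.length ≤ d / 2 + 1 →
      ∀ (τ : ℝ), 0 < τ →
        energy m τ (boostList l φ)
          ≤ C * (HnormSq (l.length + 1) f + HnormSq l.length g) := by
  choose C hC0 hC using fun n : ℕ => exists_dataNormSq_boostList_le d m₀ n 0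
  set K : ℝ := ∑ n ∈ Finset.range (d / 2 + 2), C n with hK
  have hK0 : 0 ≤ K := Finset.sum_nonneg fun n _ => hC0 n
  refine ⟨(1 + d + m₀ ^ 2) * (K + 1), by positivity,
    fun m hm hmm φ hφ hbox f g hf hg hfs hgs hφf hφg l hl τ hτ => ?_⟩
  have hfe : (fun x => φ (2, x)) = f := funext hφf
  have hge : (fun x => dt φ (2, x)) = g := funext hφg
  have hdata : HasBallData φ := ⟨by rw [hfe]; exact ⟨hf, hfs⟩, by rw [hge]; exact ⟨hg, hgs⟩⟩
  obtain ⟨h1, h2, h3⟩ := boostList_solution hφ hbox hdata l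
  have hN : HnormSq (l.length + 1) f + HnormSq l.length g = dataNormSq (0 + l.length) φ := by
    rw [dataNormSq, hfe, hge, zero_add]
  have hCK : C l.length ≤ K + 1 :=
    (Finset.single_le_sum (fun n _ => hC0 n) (Finset.mem_range.2 (by omega))).trans
      (le_add_of_nonneg_right zero_le_one)
  have hN0 : 0 ≤ dataNormSq (0 + l.length) φ := dataNormSq_nonneg _ _
  rw [hN]
  calc energy m τ (boostList l φ)
      ≤ (1 + d + m ^ 2) * dataNormSq 0 (boostList l φ) :=
        (energy_le hτ h1 h2 h3).trans (integral_fluxDensity_zero_le h1 h3).2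
    _ ≤ (1 + d + m₀ ^ 2) * ((K + 1) * dataNormSq (0 + l.length) φ) := by
        refine mul_le_mul (by gcongr) ((hC l.length m hm hmm φ hφ hbox hdata l rfl).trans
          (mul_le_mul_of_nonneg_right hCK hN0)) (dataNormSq_nonneg _ _) (by positivity)
    _ = _ := by ring
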